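/- (Renormalization estimate for the collision integral.) For every r > 0 there exists a constant C_r > 0 with the following property: for every continuous, strictly positive, rapidly decaying f : ℝ³ → ℝ with ln f of polynomial growth, ∫_{|v| ≤ r} |C(f)(v)| / √(1 + f(v)) dv ≤ C_r ( −∫_{ℝ³} C(f)(v) ln f(v) dv + ∫_{ℝ³} (1 + |v|²) f(v) dv ), where C is the hard-sphere collision integral (note that the first term on the right-hand side, the entropy production, is nonnegative). -/

import Mathlib

/-!
Write `a = f(v)f(v*)` and `b = f(v')f(v*')`. Since `|b - a| ≤ (√b - √a)² + 2√a|√b - √a|`,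
`√a ≤ √(1 + f(v)) √f(v*)` and `4(√b - √a)² ≤ (b - a)(ln b - ln a)`, one has the pointwise bound
`|b - a| ≤ √(1 + f(v)) ((b - a)(ln b - ln a) + f(v*))`. Multiplying by the kernel
`|(v - v*)·ω| ≤ (r + 1)(1 + |v*|²)` and integrating over `|v| ≤ r`, `v*` and `ω` bounds the
left-hand side by the total entropy dissipation plus a multiple of mass and energy.

The total dissipation is `-4 ∫ C(f) ln f`, because `dv dv* dω` is invariant under the exchange of
the two particles and under the collision map, a linear involution at fixed `ω`. Fubini's theorem
applies to `∫ C(f) ln f`: the gain term is carried to the loss term by the collision map, at the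
price of `ln f(v')` instead of `ln f(v)`, and `|v'| ≤ |v| + |v*|`.
-/

open MeasureTheory
open scoped RealInnerProductSpace

noncomputable section

/-- The post-collision velocity `v' = v − ((v−v*)·ω)ω`. -/
def vPost (v vs ω : EuclideanSpace ℝ (Fin 3)) : EuclideanSpace ℝ (Fin 3) :=
  v - ⟪v - vs, ω⟫ • ω

/-- The post-collision velocity `v*' = v* + ((v−v*)·ω)ω`. -/
def vsPost (v vs ω : EuclideanSpace ℝ (Fin 3)) : EuclideanSpace ℝ (Fin 3) :=
  vs + ⟪v - vs, ω⟫ • ω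

/-- The surface measure on the unit sphere `S² ⊂ ℝ³`. -/
def sphereMeasure : Measure (Metric.sphere (0 : EuclideanSpace ℝ (Fin 3)) 1) :=
  (volume : Measure (EuclideanSpace ℝ (Fin 3))).toSphere

/-- The (dimensionless, hard-sphere) Boltzmann collision integral
`C(f)(v) = ∫_{ℝ³}∫_{S²} (f(v')f(v*') − f(v)f(v*)) |(v−v*)·ω| dω dv*`. -/
def collisionIntegral (f : EuclideanSpace ℝ (Fin 3) → ℝ)
    (v : EuclideanSpace ℝ (Fin 3)) : ℝ :=
  ∫ vs, (∫ ω : Metric.sphere (0 : EuclideanSpace ℝ (Fin 3)) 1,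
    (f (vPost v vs ω) * f (vsPost v vs ω) - f v * f vs) *
      |⟪v - vs, (ω : EuclideanSpace ℝ (Fin 3))⟫| ∂sphereMeasure)

/-- A function on `ℝ³` is rapidly decaying if `sup_v (1+|v|)^k f(v) < ∞` for every `k ∈ ℕ`. -/
def RapidlyDecaying (f : EuclideanSpace ℝ (Fin 3) → ℝ) : Prop :=
  ∀ k : ℕ, ∃ C : ℝ, ∀ v, (1 + ‖v‖) ^ k * f v ≤ C

/-- `ln f` has polynomial growth: `|ln f(v)| ≤ C(1+|v|)^m` for some constants `C, m`. -/
def LogPolyGrowth (f : EuclideanSpace ℝ (Fin 3) → ℝ) : Prop :=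
  ∃ (C : ℝ) (m : ℕ), ∀ v, |Real.log (f v)| ≤ C * (1 + ‖v‖) ^ m

/-! ### Elementary inequalities -/

/-- With `x = √b / √a - 1` this is the inequality `2x / (x + 2) ≤ ln (1 + x)`. -/
lemma four_mul_sq_sqrt_sub_sqrt_le {a b : ℝ} (ha : 0 < a) (hb : 0 < b) :
    4 * (√b - √a) ^ 2 ≤ (b - a) * (Real.log b - Real.log a) := by
  wlog hab : a ≤ b generalizing a b with H
  · linarith [H hb ha (le_of_not_ge hab)]
  have hp : 0 < √a := Real.sqrt_pos.2 ha
  have hq : 0 < √b := Real.sqrt_pos.2 hb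
  have hpq : √a ≤ √b := Real.sqrt_le_sqrt hab
  have hlog : 4 * (√b - √a) / (√b + √a) ≤ Real.log b - Real.log a := by
    have h := Real.le_log_one_add_of_nonneg (sub_nonneg.2 ((one_le_div hp).2 hpq))
    rw [add_sub_cancel, Real.log_div hq.ne' hp.ne', Real.log_sqrt hb.le, Real.log_sqrt ha.le] at h
    have hden : √b / √a - 1 + 2 = (√b + √a) / √a := by field_simp; ring
    calc 4 * (√b - √a) / (√b + √a)
        = 2 * (2 * (√b / √a - 1) / (√b / √a - 1 + 2)) := by rw [hden]; field_simp; ring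
      _ ≤ Real.log b - Real.log a := by linarith
  calc 4 * (√b - √a) ^ 2
      = (√b ^ 2 - √a ^ 2) * (4 * (√b - √a) / (√b + √a)) := by rw [sq_sub_sq]; field_simp
    _ = (b - a) * (4 * (√b - √a) / (√b + √a)) := by rw [Real.sq_sqrt hb.le, Real.sq_sqrt ha.le]
    _ ≤ (b - a) * (Real.log b - Real.log a) :=
        mul_le_mul_of_nonneg_left hlog (sub_nonneg.2 hab)

lemma abs_sub_le_sq_sqrt_sub_sqrt {a b : ℝ} (ha : 0 ≤ a) (hb : 0 ≤ b) :
    |b - a| ≤ (√b - √a) ^ 2 + 2 * √a * |√b - √a| := by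
  have hsplit : b - a = (√b - √a) ^ 2 + 2 * √a * (√b - √a) := by
    linear_combination Real.sq_sqrt ha - Real.sq_sqrt hb
  calc |b - a| = |(√b - √a) ^ 2 + 2 * √a * (√b - √a)| := by rw [← hsplit]
    _ ≤ |(√b - √a) ^ 2| + |2 * √a * (√b - √a)| := abs_add_le _ _
    _ = (√b - √a) ^ 2 + 2 * √a * |√b - √a| := by
        rw [abs_mul, abs_of_nonneg (sq_nonneg (√b - √a)),
          abs_of_nonneg (by positivity : 0 ≤ 2 * √a)]

lemma abs_sub_mul_le_sqrt_one_add_mul {x y b : ℝ} (hx : 0 < x) (hy : 0 < y) (hb : 0 < b) :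
    |b - x * y| ≤ √(1 + x) * ((b - x * y) * (Real.log b - Real.log (x * y)) + y) := by
  have hxy : 0 < x * y := mul_pos hx hy
  have hs : 1 ≤ √(1 + x) := Real.one_le_sqrt.2 (by linarith)
  have hsqrt : √(x * y) ≤ √(1 + x) * √y := by
    rw [Real.sqrt_mul hx.le]
    gcongr
    linarith
  set d := |√b - √(x * y)| with hd
  have hlog : 4 * d ^ 2 ≤ (b - x * y) * (Real.log b - Real.log (x * y)) := by
    rw [hd, sq_abs]
    exact four_mul_sq_sqrt_sub_sqrt_le hxy hb
  have hyd : 2 * √y * d ≤ y + d ^ 2 := by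
    simpa only [Real.sq_sqrt hy.le] using two_mul_le_add_sq (√y) d
  calc |b - x * y| ≤ d ^ 2 + 2 * √(x * y) * d := by
        rw [hd, sq_abs]; exact abs_sub_le_sq_sqrt_sub_sqrt hxy.le hb.le
    _ ≤ √(1 + x) * d ^ 2 + √(1 + x) * (2 * √y * d) := by
        have := mul_le_mul_of_nonneg_right hsqrt (abs_nonneg (√b - √(x * y)))
        linarith [le_mul_of_one_le_left (sq_nonneg d) hs]
    _ ≤ √(1 + x) * d ^ 2 + √(1 + x) * (y + d ^ 2) := by gcongr
    _ ≤ √(1 + x) * (4 * d ^ 2 + y) := by nlinarith [sq_nonneg d]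
    _ ≤ √(1 + x) * ((b - x * y) * (Real.log b - Real.log (x * y)) + y) := by
        gcongr

/-! ### Iterated integrals and invariant measures -/

section Integration

lemma integral_norm_integral_le_of_norm_le {α β E : Type*} [MeasurableSpace α]
    [MeasurableSpace β] [NormedAddCommGroup E] [NormedSpace ℝ E] {μ : Measure α} {ν : Measure β}
    [SFinite μ] [SFinite ν] {F : α × β → E} {K : α × β → ℝ} (hK : Integrable K (μ.prod ν))
    (hFK : ∀ᵐ z ∂μ.prod ν, ‖F z‖ ≤ K z) :
    ∫ x, ‖∫ y, F (x, y) ∂ν‖ ∂μ ≤ ∫ z, K z ∂μ.prod ν := by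
  rw [integral_prod _ hK]
  refine integral_mono_of_nonneg (.of_forall fun x => norm_nonneg _) hK.integral_prod_left ?_
  filter_upwards [hK.prod_right_ae, Measure.ae_ae_of_ae_prod hFK] with x hKx hFKx
  exact norm_integral_le_of_norm_le hKx hFKx

lemma integral_norm_integral_integral_le_of_norm_le {α β γ E : Type*} [MeasurableSpace α]
    [MeasurableSpace β] [MeasurableSpace γ] [NormedAddCommGroup E] [NormedSpace ℝ E]
    {μ : Measure α} {ν : Measure β} {ρ : Measure γ} [SFinite μ] [SFinite ν] [SFinite ρ]
    {F : (α × β) × γ → E} {K : (α × β) × γ → ℝ} (hK : Integrable K ((μ.prod ν).prod ρ))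
    (hFK : ∀ᵐ z ∂(μ.prod ν).prod ρ, ‖F z‖ ≤ K z) :
    ∫ x, ‖∫ y, ∫ w, F ((x, y), w) ∂ρ ∂ν‖ ∂μ ≤ ∫ z, K z ∂(μ.prod ν).prod ρ := by
  rw [integral_prod _ hK]
  refine integral_norm_integral_le_of_norm_le (F := fun p => ∫ w, F (p, w) ∂ρ)
    hK.integral_prod_left ?_
  filter_upwards [hK.prod_right_ae, Measure.ae_ae_of_ae_prod hFK] with p hKp hFKp
  exact norm_integral_le_of_norm_le hKp hFKp

lemma integral_comp_eq_of_involutive {α E : Type*} [MeasurableSpace α] [NormedAddCommGroup E]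
    [NormedSpace ℝ E] {μ : Measure α} {T : α → α} (hT : MeasurePreserving T μ μ)
    (hinv : Function.Involutive T) (F : α → E) : ∫ z, F (T z) ∂μ = ∫ z, F z ∂μ :=
  hT.integral_comp (MeasurableEquiv.ofInvolutive T hinv hT.measurable).measurableEmbedding F

lemma integrable_add_comp {α E : Type*} [MeasurableSpace α] [NormedAddCommGroup E]
    {μ : Measure α} {T : α → α} (hT : MeasurePreserving T μ μ) {F : α → E} (hF : Integrable F μ) :
    Integrable (fun z => F z + F (T z)) μ :=
  hF.add (hT.integrable_comp_of_integrable hF)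

lemma integral_add_comp_of_involutive {α : Type*} [MeasurableSpace α] {μ : Measure α}
    {T : α → α} (hT : MeasurePreserving T μ μ) (hinv : Function.Involutive T) {F : α → ℝ}
    (hF : Integrable F μ) : ∫ z, (F z + F (T z)) ∂μ = 2 * ∫ z, F z ∂μ := by
  have hFT : Integrable (fun z => F (T z)) μ := hT.integrable_comp_of_integrable hF
  rw [integral_add hF hFT, integral_comp_eq_of_involutive hT hinv, two_mul]

variable {E : Type*} [NormedAddCommGroup E] [NormedSpace ℝ E] [FiniteDimensional ℝ E]
  [MeasurableSpace E] [BorelSpace E] (μ : Measure E) [μ.IsAddHaarMeasure]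

lemma measurePreserving_of_linear_involutive {T : E →ₗ[ℝ] E} (hT : Function.Involutive T) :
    MeasurePreserving T μ μ := by
  have hcomp : T ∘ₗ T = LinearMap.id := LinearMap.ext hT
  have hdet : LinearMap.det T * LinearMap.det T = 1 := by
    rw [← LinearMap.det_comp, hcomp, LinearMap.det_id]
  have habs : |(LinearMap.det T)⁻¹| = 1 := by
    rcases mul_self_eq_one_iff.1 hdet with h | h <;>
      simp only [h, inv_one, inv_neg, abs_neg, abs_one]
  refine ⟨T.continuous_of_finiteDimensional.measurable, ?_⟩
  rw [Measure.map_linearMap_addHaar_eq_smul_addHaar μ (left_ne_zero_of_mul_eq_one hdet), habs,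
    ENNReal.ofReal_one, one_smul]

lemma integrable_one_add_norm_pow_mul_of_le {f : E → ℝ} (hf : AEStronglyMeasurable f μ) {k n : ℕ}
    (hn : Module.finrank ℝ E < n) {A : ℝ} (hA : ∀ v, (1 + ‖v‖) ^ (k + n) * |f v| ≤ A) :
    Integrable (fun v => (1 + ‖v‖) ^ k * f v) μ := by
  have hweight : Integrable (fun v : E => A * (1 + ‖v‖) ^ (-(n : ℝ))) μ :=
    (integrable_one_add_norm (by exact_mod_cast hn)).const_mul A
  have hpow : AEStronglyMeasurable (fun v : E => (1 + ‖v‖) ^ k) μ :=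
    (by fun_prop : Continuous fun v : E => (1 + ‖v‖) ^ k).aestronglyMeasurable
  refine hweight.mono' (hpow.mul hf) (.of_forall fun v => ?_)
  have hv : 0 < 1 + ‖v‖ := by positivity
  rw [norm_mul, Real.norm_of_nonneg (by positivity), Real.norm_eq_abs, Real.rpow_neg hv.le,
    Real.rpow_natCast, ← div_eq_mul_inv, le_div_iff₀ (by positivity)]
  calc (1 + ‖v‖) ^ k * |f v| * (1 + ‖v‖) ^ n = (1 + ‖v‖) ^ (k + n) * |f v| := by ring
    _ ≤ A := hA v

end Integration

/-! ### The collision map -/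

local notation "E3" => EuclideanSpace ℝ (Fin 3)
local notation "S2" => Metric.sphere (0 : EuclideanSpace ℝ (Fin 3)) 1

lemma inner_vPost_sub_vsPost (v vs : E3) (ω : S2) :
    ⟪vPost v vs ω - vsPost v vs ω, (ω : E3)⟫ = -⟪v - vs, (ω : E3)⟫ := by
  have hω : ⟪(ω : E3), (ω : E3)⟫ = 1 := by
    rw [real_inner_self_eq_norm_sq, norm_eq_of_mem_sphere, one_pow]
  simp only [vPost, vsPost, inner_sub_left, inner_add_left, real_inner_smul_left, hω]
  ring

lemma vPost_vPost_vsPost (v vs : E3) (ω : S2) :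
    vPost (vPost v vs ω) (vsPost v vs ω) ω = v := by
  rw [vPost, inner_vPost_sub_vsPost, vPost]; module

lemma vsPost_vPost_vsPost (v vs : E3) (ω : S2) :
    vsPost (vPost v vs ω) (vsPost v vs ω) ω = vs := by
  rw [vsPost, inner_vPost_sub_vsPost, vsPost]; module

lemma vPost_swap (v vs ω : E3) : vPost vs v ω = vsPost v vs ω := by
  rw [vPost, vsPost, ← neg_sub v vs, inner_neg_left]; module

lemma vsPost_swap (v vs ω : E3) : vsPost vs v ω = vPost v vs ω := by
  rw [vPost, vsPost, ← neg_sub v vs, inner_neg_left]; module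

lemma norm_sq_vPost_add_norm_sq_vsPost (v vs : E3) (ω : S2) :
    ‖vPost v vs ω‖ ^ 2 + ‖vsPost v vs ω‖ ^ 2 = ‖v‖ ^ 2 + ‖vs‖ ^ 2 := by
  rw [vPost, vsPost, norm_sub_sq_real, norm_add_sq_real, norm_smul, norm_eq_of_mem_sphere ω,
    real_inner_smul_right, real_inner_smul_right, inner_sub_left, Real.norm_eq_abs, mul_one, sq_abs]
  ring

lemma norm_vPost_le (v vs : E3) (ω : S2) : ‖vPost v vs ω‖ ≤ ‖v‖ + ‖vs‖ := by
  refine le_of_sq_le_sq ?_ (by positivity)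
  nlinarith [norm_sq_vPost_add_norm_sq_vsPost v vs ω, sq_nonneg ‖vsPost v vs ω‖,
    mul_nonneg (norm_nonneg v) (norm_nonneg vs)]

/-- The linear map `(v, v*) ↦ (v', v*')` describing a collision with fixed direction `ω`. -/
def collisionLinearMap (ω : E3) : (E3 × E3) →ₗ[ℝ] (E3 × E3) where
  toFun p := (vPost p.1 p.2 ω, vsPost p.1 p.2 ω)
  map_add' p q := by
    ext1 <;> simp only [vPost, vsPost, Prod.fst_add, Prod.snd_add, inner_sub_left,
      inner_add_left] <;> module
  map_smul' c p := by
    ext1 <;> simp only [vPost, vsPost, Prod.smul_fst, Prod.smul_snd, inner_sub_left,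
      real_inner_smul_left, RingHom.id_apply] <;> module

lemma collisionLinearMap_involutive (ω : S2) : Function.Involutive (collisionLinearMap ω) :=
  fun p => Prod.ext (vPost_vPost_vsPost p.1 p.2 ω) (vsPost_vPost_vsPost p.1 p.2 ω)

/-- The space of collisions `((v, v*), ω)`, over which the double integrals of the theory run. -/
abbrev CollisionSpace : Type := (E3 × E3) × S2

/-- The measure `dv dv* dω` on the space of collisions. -/
def collisionMeasure : Measure CollisionSpace :=
  ((volume : Measure E3).prod (volume : Measure E3)).prod sphereMeasure

instance isFiniteMeasure_sphereMeasure : IsFiniteMeasure sphereMeasure := by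
  unfold sphereMeasure; infer_instance

/-- The collision map `((v, v*), ω) ↦ ((v', v*'), ω)`. -/
def collisionMap (z : CollisionSpace) : CollisionSpace := (collisionLinearMap z.2 z.1, z.2)

/-- The exchange `((v, v*), ω) ↦ ((v*, v), ω)` of the two particles. -/
def particleSwap (z : CollisionSpace) : CollisionSpace := (z.1.swap, z.2)

lemma collisionMap_involutive : Function.Involutive collisionMap :=
  fun z => Prod.ext (collisionLinearMap_involutive z.2 z.1) rfl

lemma particleSwap_involutive : Function.Involutive particleSwap := fun _ => rfl

lemma continuous_collisionLinearMap_uncurry :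
    Continuous fun z : S2 × (E3 × E3) => collisionLinearMap z.1 z.2 := by
  simp only [collisionLinearMap, LinearMap.coe_mk, AddHom.coe_mk, vPost, vsPost]
  fun_prop

lemma measurePreserving_collisionMap :
    MeasurePreserving collisionMap collisionMeasure collisionMeasure := by
  have hfiber (ω : S2) := measurePreserving_of_linear_involutive
    ((volume : Measure E3).prod (volume : Measure E3)) (collisionLinearMap_involutive ω)
  have hmeas : Measurable (Function.uncurry fun (ω : S2) p => collisionLinearMap ω p) :=
    continuous_collisionLinearMap_uncurry.measurable
  have hskew : MeasurePreserving (fun z : S2 × (E3 × E3) => (z.1, collisionLinearMap z.1 z.2))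
      (sphereMeasure.prod ((volume : Measure E3).prod (volume : Measure E3)))
      (sphereMeasure.prod ((volume : Measure E3).prod (volume : Measure E3))) :=
    (MeasurePreserving.id sphereMeasure).skew_product hmeas
      (.of_forall fun ω => (hfiber ω).map_eq)
  have hconj : collisionMap =
      (Prod.swap ∘ fun z : S2 × (E3 × E3) => (z.1, collisionLinearMap z.1 z.2)) ∘ Prod.swap := rfl
  rw [hconj]
  exact (Measure.measurePreserving_swap.comp hskew).comp Measure.measurePreserving_swap

lemma measurePreserving_particleSwap :
    MeasurePreserving particleSwap collisionMeasure collisionMeasure :=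
  Measure.measurePreserving_swap.prod (MeasurePreserving.id _)

/-! ### Entropy dissipation -/

/-- The hard-sphere collision kernel `|(v - v*)·ω|`. -/
def collisionKernel (z : CollisionSpace) : ℝ := |⟪z.1.1 - z.1.2, (z.2 : E3)⟫|

/-- The integrand `(f(v')f(v*') - f(v)f(v*)) |(v - v*)·ω|` of the collision integral. -/
def collisionIntegrand (f : E3 → ℝ) (z : CollisionSpace) : ℝ :=
  (f (vPost z.1.1 z.1.2 z.2) * f (vsPost z.1.1 z.1.2 z.2) - f z.1.1 * f z.1.2) * collisionKernel z

/-- The entropy dissipation density `(b - a)(ln b - ln a) |(v - v*)·ω|` of a collision, where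
`a = f(v)f(v*)` and `b = f(v')f(v*')`. -/
def entropyDissipation (f : E3 → ℝ) (z : CollisionSpace) : ℝ :=
  collisionIntegrand f z *
    (Real.log (f (vPost z.1.1 z.1.2 z.2) * f (vsPost z.1.1 z.1.2 z.2))
      - Real.log (f z.1.1 * f z.1.2))

/-- The density `(b - a) |(v - v*)·ω| ln f(v)`, whose integral over `v*` and `ω` is
`C(f)(v) ln f(v)`. -/
def entropyProductionIntegrand (f : E3 → ℝ) (z : CollisionSpace) : ℝ :=
  collisionIntegrand f z * Real.log (f z.1.1)

lemma collisionKernel_nonneg (z : CollisionSpace) : 0 ≤ collisionKernel z := abs_nonneg _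

lemma collisionKernel_collisionMap (z : CollisionSpace) :
    collisionKernel (collisionMap z) = collisionKernel z :=
  (congrArg abs (inner_vPost_sub_vsPost z.1.1 z.1.2 z.2)).trans (abs_neg _)

lemma collisionKernel_particleSwap (z : CollisionSpace) :
    collisionKernel (particleSwap z) = collisionKernel z := by
  simp only [collisionKernel, particleSwap, Prod.fst_swap, Prod.snd_swap]
  rw [← neg_sub z.1.1 z.1.2, inner_neg_left, abs_neg]

lemma collisionKernel_le (z : CollisionSpace) : collisionKernel z ≤ ‖z.1.1‖ + ‖z.1.2‖ :=
  calc collisionKernel z ≤ ‖z.1.1 - z.1.2‖ * ‖(z.2 : E3)‖ := abs_real_inner_le_norm _ _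
    _ = ‖z.1.1 - z.1.2‖ := by rw [norm_eq_of_mem_sphere, mul_one]
    _ ≤ ‖z.1.1‖ + ‖z.1.2‖ := norm_sub_le _ _

lemma measurable_collisionKernel : Measurable collisionKernel := by
  unfold collisionKernel
  fun_prop

lemma collisionIntegrand_collisionMap (f : E3 → ℝ) (z : CollisionSpace) :
    collisionIntegrand f (collisionMap z) = -collisionIntegrand f z := by
  rw [collisionIntegrand, collisionKernel_collisionMap]
  simp only [collisionIntegrand, collisionMap, collisionLinearMap, LinearMap.coe_mk, AddHom.coe_mk,
    vPost_vPost_vsPost, vsPost_vPost_vsPost]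
  ring

lemma collisionIntegrand_particleSwap (f : E3 → ℝ) (z : CollisionSpace) :
    collisionIntegrand f (particleSwap z) = collisionIntegrand f z := by
  rw [collisionIntegrand, collisionKernel_particleSwap]
  simp only [collisionIntegrand, particleSwap, Prod.fst_swap, Prod.snd_swap, vPost_swap z.1.1 z.1.2,
    vsPost_swap z.1.1 z.1.2]
  ring

lemma integral_entropyProductionIntegrand {f : E3 → ℝ}
    (hint : Integrable (entropyProductionIntegrand f) collisionMeasure) :
    ∫ z, entropyProductionIntegrand f z ∂collisionMeasure =
      ∫ v, collisionIntegral f v * Real.log (f v) := by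
  unfold collisionMeasure at hint ⊢
  rw [integral_prod _ hint, integral_prod _ hint.integral_prod_left]
  simp only [entropyProductionIntegrand, integral_mul_const]
  rfl

section Dissipation

variable {f : E3 → ℝ} (hpos : ∀ v, 0 < f v)
include hpos

lemma entropyDissipation_nonneg (z : CollisionSpace) : 0 ≤ entropyDissipation f z := by
  rw [entropyDissipation, collisionIntegrand, mul_right_comm]
  refine mul_nonneg (le_trans ?_ (four_mul_sq_sqrt_sub_sqrt_le (mul_pos (hpos _) (hpos _))
    (mul_pos (hpos _) (hpos _)))) (collisionKernel_nonneg z)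
  positivity

lemma entropyDissipation_eq_neg_sum (z : CollisionSpace) :
    entropyDissipation f z =
      -((entropyProductionIntegrand f z + entropyProductionIntegrand f (particleSwap z)) +
        (entropyProductionIntegrand f (collisionMap z) +
          entropyProductionIntegrand f (particleSwap (collisionMap z)))) := by
  simp only [entropyProductionIntegrand, collisionIntegrand_particleSwap,
    collisionIntegrand_collisionMap, entropyDissipation]
  rw [Real.log_mul (hpos _).ne' (hpos _).ne', Real.log_mul (hpos _).ne' (hpos _).ne']
  simp only [particleSwap, collisionMap, collisionLinearMap, LinearMap.coe_mk, AddHom.coe_mk,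
    Prod.fst_swap]
  ring

lemma abs_collisionIntegrand_le (z : CollisionSpace) :
    |collisionIntegrand f z| ≤
      √(1 + f z.1.1) * (entropyDissipation f z + collisionKernel z * f z.1.2) := by
  have h := mul_le_mul_of_nonneg_right
    (abs_sub_mul_le_sqrt_one_add_mul (hpos z.1.1) (hpos z.1.2)
      (mul_pos (hpos (vPost z.1.1 z.1.2 z.2)) (hpos (vsPost z.1.1 z.1.2 z.2))))
    (collisionKernel_nonneg z)
  rw [collisionIntegrand, abs_mul, abs_of_nonneg (collisionKernel_nonneg z)]
  refine h.trans (le_of_eq ?_)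
  rw [entropyDissipation, collisionIntegrand]
  ring

variable (hint : Integrable (entropyProductionIntegrand f) collisionMeasure)
include hint

lemma integrable_entropyDissipation : Integrable (entropyDissipation f) collisionMeasure := by
  rw [funext (entropyDissipation_eq_neg_sum hpos)]
  exact (integrable_add_comp measurePreserving_collisionMap
    (integrable_add_comp measurePreserving_particleSwap hint)).neg

lemma integral_entropyDissipation :
    ∫ z, entropyDissipation f z ∂collisionMeasure =
      4 * -∫ v, collisionIntegral f v * Real.log (f v) := by
  rw [funext (entropyDissipation_eq_neg_sum hpos), integral_neg,
    integral_add_comp_of_involutive measurePreserving_collisionMap collisionMap_involutive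
      (integrable_add_comp measurePreserving_particleSwap hint),
    integral_add_comp_of_involutive measurePreserving_particleSwap particleSwap_involutive hint,
    integral_entropyProductionIntegrand hint]
  ring

end Dissipation

/-! ### Integrability of the entropy production -/

lemma RapidlyDecaying.integrable_one_add_norm_pow_mul {f : E3 → ℝ} (hdec : RapidlyDecaying f)
    (hf : Measurable f) (hf0 : ∀ v, 0 ≤ f v) (k : ℕ) :
    Integrable (fun v => (1 + ‖v‖) ^ k * f v) := by
  obtain ⟨A, hA⟩ := hdec (k + 4)
  refine integrable_one_add_norm_pow_mul_of_le volume hf.aestronglyMeasurable (n := 4)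
    (by rw [finrank_euclideanSpace_fin]; norm_num) (A := A) fun v => ?_
  rw [abs_of_nonneg (hf0 v)]
  exact hA v

lemma RapidlyDecaying.integrable_one_add_norm_sq_mul {f : E3 → ℝ} (hdec : RapidlyDecaying f)
    (hf : Measurable f) (hf0 : ∀ v, 0 ≤ f v) : Integrable (fun v => (1 + ‖v‖ ^ 2) * f v) := by
  refine (hdec.integrable_one_add_norm_pow_mul hf hf0 2).mono' (by fun_prop)
    (.of_forall fun v => ?_)
  rw [Real.norm_of_nonneg (mul_nonneg (by positivity) (hf0 v))]
  refine mul_le_mul_of_nonneg_right ?_ (hf0 v)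
  linarith [add_sq 1 ‖v‖, norm_nonneg v]

section EntropyProduction

variable {f : E3 → ℝ} {L : ℝ} {m : ℕ} (hf : Measurable f) (hf0 : ∀ v, 0 ≤ f v)
  (hlog : ∀ v, |Real.log (f v)| ≤ L * (1 + ‖v‖) ^ m)
include hf0 hlog

lemma abs_mul_collisionKernel_mul_log_le {z : CollisionSpace} {u : E3}
    (hu : ‖u‖ ≤ ‖z.1.1‖ + ‖z.1.2‖) :
    |f z.1.1 * f z.1.2 * collisionKernel z * Real.log (f u)| ≤
      L * (((1 + ‖z.1.1‖) ^ (m + 1) * f z.1.1) * ((1 + ‖z.1.2‖) ^ (m + 1) * f z.1.2)) := by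
  have hL : 0 ≤ L := by simpa using (abs_nonneg _).trans (hlog 0)
  have hff : 0 ≤ f z.1.1 * f z.1.2 := mul_nonneg (hf0 _) (hf0 _)
  set w := (1 + ‖z.1.1‖) * (1 + ‖z.1.2‖) with hw
  have hsum : 1 + (‖z.1.1‖ + ‖z.1.2‖) ≤ w := by
    linarith [mul_nonneg (norm_nonneg z.1.1) (norm_nonneg z.1.2)]
  have hkernel : collisionKernel z ≤ w := by linarith [collisionKernel_le z]
  have hlogu : |Real.log (f u)| ≤ L * w ^ m :=
    (hlog u).trans (by gcongr; linarith)
  rw [abs_mul, abs_of_nonneg (mul_nonneg hff (collisionKernel_nonneg z))]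
  calc f z.1.1 * f z.1.2 * collisionKernel z * |Real.log (f u)|
      ≤ f z.1.1 * f z.1.2 * w * (L * w ^ m) := by gcongr
    _ = L * (((1 + ‖z.1.1‖) ^ (m + 1) * f z.1.1) * ((1 + ‖z.1.2‖) ^ (m + 1) * f z.1.2)) := by
        rw [hw, mul_pow]; ring

variable (hint : Integrable (fun v => (1 + ‖v‖) ^ (m + 1) * f v))
include hf hint

lemma integrable_mul_collisionKernel_mul_log {u : CollisionSpace → E3} (hu : Measurable u)
    (hu_le : ∀ z, ‖u z‖ ≤ ‖z.1.1‖ + ‖z.1.2‖) :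
    Integrable (fun z => f z.1.1 * f z.1.2 * collisionKernel z * Real.log (f (u z)))
      collisionMeasure := by
  have hmeas := measurable_collisionKernel
  refine (((hint.mul_prod hint).comp_fst sphereMeasure).const_mul L).mono'
    (by fun_prop) (.of_forall fun z => ?_)
  exact abs_mul_collisionKernel_mul_log_le hf0 hlog (hu_le z)

lemma integrable_entropyProductionIntegrand_of_abs_log_le :
    Integrable (entropyProductionIntegrand f) collisionMeasure := by
  have hloss : Integrable (fun z => f z.1.1 * f z.1.2 * collisionKernel z * Real.log (f z.1.1))
      collisionMeasure :=
    integrable_mul_collisionKernel_mul_log hf hf0 hlog hint (by fun_prop)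
      fun z => le_add_of_nonneg_right (norm_nonneg _)
  have hmeas_post : Measurable fun z : CollisionSpace => vPost z.1.1 z.1.2 z.2 := by
    unfold vPost; fun_prop
  have hgain := measurePreserving_collisionMap.integrable_comp_of_integrable
    (integrable_mul_collisionKernel_mul_log hf hf0 hlog hint hmeas_post
      fun z => norm_vPost_le z.1.1 z.1.2 z.2)
  refine (hgain.sub hloss).congr (.of_forall fun z => ?_)
  simp only [Pi.sub_apply, Function.comp_apply, collisionKernel_collisionMap]
  simp only [collisionMap, collisionLinearMap, LinearMap.coe_mk, AddHom.coe_mk, vPost_vPost_vsPost,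
    entropyProductionIntegrand, collisionIntegrand]
  ring

end EntropyProduction

lemma RapidlyDecaying.integrable_entropyProductionIntegrand {f : E3 → ℝ} (hdec : RapidlyDecaying f)
    (hf : Measurable f) (hf0 : ∀ v, 0 ≤ f v) (hlog : LogPolyGrowth f) :
    Integrable (entropyProductionIntegrand f) collisionMeasure := by
  obtain ⟨L, m, hL⟩ := hlog
  exact integrable_entropyProductionIntegrand_of_abs_log_le hf hf0 hL
    (hdec.integrable_one_add_norm_pow_mul hf hf0 (m + 1))

/-! ### The renormalization estimate -/

lemma integral_abs_collisionIntegral_div_sqrt_le {μ : Measure E3} [SFinite μ] {f : E3 → ℝ}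
    (hf0 : ∀ v, 0 ≤ f v) {K : CollisionSpace → ℝ}
    (hK : Integrable K ((μ.prod volume).prod sphereMeasure))
    (hfK : ∀ᵐ z ∂(μ.prod volume).prod sphereMeasure,
      |collisionIntegrand f z| ≤ √(1 + f z.1.1) * K z) :
    ∫ v, |collisionIntegral f v| / √(1 + f v) ∂μ ≤
      ∫ z, K z ∂(μ.prod volume).prod sphereMeasure := by
  have hs (v : E3) : 0 < √(1 + f v) := Real.sqrt_pos.2 (by linarith [hf0 v])
  have hdiv (v : E3) : |collisionIntegral f v| / √(1 + f v) =
      ‖∫ vs, ∫ ω, collisionIntegrand f ((v, vs), ω) / √(1 + f v) ∂sphereMeasure‖ := by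
    simp only [integral_div, norm_div, Real.norm_eq_abs, abs_of_pos (hs v)]
    rfl
  simp only [hdiv]
  refine integral_norm_integral_integral_le_of_norm_le
    (F := fun z => collisionIntegrand f z / √(1 + f z.1.1)) hK ?_
  filter_upwards [hfK] with z hz
  rwa [norm_div, Real.norm_eq_abs, Real.norm_eq_abs, abs_of_pos (hs _), div_le_iff₀ (hs _),
    mul_comm]

lemma abs_collisionIntegrand_le_of_norm_le {f : E3 → ℝ} (hpos : ∀ v, 0 < f v) {r : ℝ}
    {z : CollisionSpace} (hz : ‖z.1.1‖ ≤ r) :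
    |collisionIntegrand f z| ≤ √(1 + f z.1.1) *
      (entropyDissipation f z + (|r| + 1) * ((1 + ‖z.1.2‖ ^ 2) * f z.1.2)) := by
  have hkernel : collisionKernel z ≤ (|r| + 1) * (1 + ‖z.1.2‖ ^ 2) := by
    nlinarith [collisionKernel_le z, le_abs_self r, sq_nonneg (‖z.1.2‖ - 1),
      mul_nonneg (abs_nonneg r) (sq_nonneg ‖z.1.2‖)]
  refine (abs_collisionIntegrand_le hpos z).trans ?_
  rw [← mul_assoc (|r| + 1)]
  gcongr
  exact (hpos _).le

lemma setIntegral_abs_collisionIntegral_div_sqrt_le {f : E3 → ℝ} (hpos : ∀ v, 0 < f v)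
    (hdiss : Integrable (entropyDissipation f) collisionMeasure)
    (henergy : Integrable (fun v => (1 + ‖v‖ ^ 2) * f v)) (r : ℝ) :
    ∫ v in Metric.closedBall 0 r, |collisionIntegral f v| / √(1 + f v) ≤
      ∫ z, entropyDissipation f z ∂collisionMeasure +
        sphereMeasure.real Set.univ * (volume.real (Metric.closedBall (0 : E3) r) * (|r| + 1)) *
          ∫ v, (1 + ‖v‖ ^ 2) * f v := by
  set μ := (volume : Measure E3).restrict (Metric.closedBall 0 r) with hμ
  set π := (μ.prod (volume : Measure E3)).prod sphereMeasure with hπ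
  have : IsFiniteMeasure μ := isFiniteMeasure_restrict.2 measure_closedBall_lt_top.ne
  have hle : π ≤ collisionMeasure :=
    Measure.prod_mono (Measure.prod_mono Measure.restrict_le_self le_rfl) le_rfl
  have hball : ∀ᵐ z ∂π, ‖z.1.1‖ ≤ r := by
    have hfst : Measure.QuasiMeasurePreserving (fun z : CollisionSpace => z.1.1) π μ :=
      Measure.quasiMeasurePreserving_fst.comp Measure.quasiMeasurePreserving_fst
    refine hfst.ae (p := fun v => ‖v‖ ≤ r) ?_
    filter_upwards [ae_restrict_mem measurableSet_closedBall] with v hv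
    exact mem_closedBall_zero_iff.1 hv
  have hweighted : Integrable
      (fun z : CollisionSpace => (|r| + 1) * ((1 + ‖z.1.2‖ ^ 2) * f z.1.2)) π :=
    ((henergy.const_mul (|r| + 1)).comp_snd μ).comp_fst sphereMeasure
  calc ∫ v in Metric.closedBall 0 r, |collisionIntegral f v| / √(1 + f v)
      ≤ ∫ z, (entropyDissipation f z + (|r| + 1) * ((1 + ‖z.1.2‖ ^ 2) * f z.1.2)) ∂π :=
        integral_abs_collisionIntegral_div_sqrt_le (fun v => (hpos v).le)
          ((hdiss.mono_measure hle).add hweighted)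
          (hball.mono fun z hz => abs_collisionIntegrand_le_of_norm_le hpos hz)
    _ = ∫ z, entropyDissipation f z ∂π +
        ∫ z : CollisionSpace, (|r| + 1) * ((1 + ‖z.1.2‖ ^ 2) * f z.1.2) ∂π :=
        integral_add (hdiss.mono_measure hle) hweighted
    _ ≤ _ := by
        refine add_le_add (integral_mono_measure hle
          (.of_forall (entropyDissipation_nonneg hpos)) hdiss) (le_of_eq ?_)
        rw [hπ, integral_fun_fst (fun p : E3 × E3 => (|r| + 1) * ((1 + ‖p.2‖ ^ 2) * f p.2)),
          integral_fun_snd (fun v : E3 => (|r| + 1) * ((1 + ‖v‖ ^ 2) * f v)), integral_const_mul,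
          hμ, measureReal_restrict_apply_univ, smul_eq_mul, smul_eq_mul]
        ring

/-- Integrability of `entropyProductionIntegrand f` is the absolute convergence of `∫ C(f) ln f`
as an integral over all collisions. -/
theorem collisionIntegral_renormalization_estimate_general (r : ℝ) :
    ∃ C : ℝ, 0 < C ∧
      ∀ f : E3 → ℝ, (∀ v, 0 < f v) →
        Integrable (entropyProductionIntegrand f) collisionMeasure →
        Integrable (fun v => (1 + ‖v‖ ^ 2) * f v) →
        (∫ v in Metric.closedBall (0 : E3) r, |collisionIntegral f v| / √(1 + f v)) ≤
          C * (-(∫ v, collisionIntegral f v * Real.log (f v)) + ∫ v, (1 + ‖v‖ ^ 2) * f v) := by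
  set c := sphereMeasure.real Set.univ *
    (volume.real (Metric.closedBall (0 : E3) r) * (|r| + 1))
  have hc : 0 ≤ c := by positivity
  refine ⟨4 + c, by positivity, fun f hpos hint henergy => ?_⟩
  set H := -∫ v, collisionIntegral f v * Real.log (f v)
  set M := ∫ v, (1 + ‖v‖ ^ 2) * f v
  have hM : 0 ≤ M := integral_nonneg fun v => mul_nonneg (by positivity) (hpos v).le
  have hD : ∫ z, entropyDissipation f z ∂collisionMeasure = 4 * H :=
    integral_entropyDissipation hpos hint
  have hH : 0 ≤ H := by
    linarith [(integral_nonneg (entropyDissipation_nonneg hpos) :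
      0 ≤ ∫ z, entropyDissipation f z ∂collisionMeasure)]
  calc ∫ v in Metric.closedBall (0 : E3) r, |collisionIntegral f v| / √(1 + f v)
      ≤ ∫ z, entropyDissipation f z ∂collisionMeasure + c * M :=
        setIntegral_abs_collisionIntegral_div_sqrt_le hpos
          (integrable_entropyDissipation hpos hint) henergy r
    _ = 4 * H + c * M := by rw [hD]
    _ ≤ (4 + c) * (H + M) := by linarith [mul_nonneg hc hH]

/-- **Renormalization estimate for the collision integral.** For every `r > 0` there is a
constant `C_r > 0` such that for every continuous, strictly positive, rapidly decaying `f`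
with `ln f` of polynomial growth,
`∫_{|v|≤r} |C(f)(v)|/√(1+f(v)) dv ≤ C_r (−∫ C(f) ln f dv + ∫ (1+|v|²) f dv)`. -/
theorem collisionIntegral_renormalization_estimate (r : ℝ) (hr : 0 < r) :
    ∃ C : ℝ, 0 < C ∧
      ∀ f : EuclideanSpace ℝ (Fin 3) → ℝ,
        Continuous f → (∀ v, 0 < f v) → RapidlyDecaying f → LogPolyGrowth f →
        (∫ v in Metric.closedBall (0 : EuclideanSpace ℝ (Fin 3)) r,
            |collisionIntegral f v| / Real.sqrt (1 + f v)) ≤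
          C * (-(∫ v, collisionIntegral f v * Real.log (f v)) +
            ∫ v, (1 + ‖v‖ ^ 2) * f v) := by
  obtain ⟨C, hC, hest⟩ := collisionIntegral_renormalization_estimate_general r
  exact ⟨C, hC, fun f hf hpos hdec hlog => hest f hpos
    (hdec.integrable_entropyProductionIntegrand hf.measurable (fun v => (hpos v).le) hlog)
    (hdec.integrable_one_add_norm_sq_mul hf.measurable fun v => (hpos v).le)⟩

end
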